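/- If ẑ satisfies the quadratic convolution recurrence (l+1)ẑ_{l+1} = Σ_{l'=0}^{l} ẑ_{l'}ẑ_{l-l'}, then z_n := Σ_{l=0}^{n} (n!/(n-l)!)·ẑ_l satisfies z_{n+1} - z_n = Σ' over k₁+k₂ ≤ n of ((-1)^{k₁+k₂+n}/(k₁!k₂!))·z_{k₁}z_{k₂}·n!/(n-k₁-k₂)!. -/

import Mathlib

open Finset

open PowerSeries in
/-- The exponential generating function of the interpolating transform of `a` is `exp` times the
ordinary generating function of `a`. -/
theorem mk_interpolating_transform (a z : ℕ → ℝ)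
    (hz : ∀ n : ℕ, z n = ∑ l ∈ range (n + 1), (n.descFactorial l : ℝ) * a l) :
    PowerSeries.mk (fun n => z n / (n.factorial : ℝ)) = PowerSeries.mk a * exp ℝ := by
  ext n
  rw [coeff_mk, coeff_mul, Nat.sum_antidiagonal_eq_sum_range_succ_mk, hz, sum_div]
  refine sum_congr rfl fun l hl => ?_
  have hl : l ≤ n := Nat.lt_succ_iff.mp (mem_range.mp hl)
  have h : ((n - l).factorial : ℝ) * (n.descFactorial l : ℝ) = n.factorial := by
    exact_mod_cast Nat.factorial_mul_descFactorial hl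
  have h0 : (n.factorial : ℝ) ≠ 0 := by positivity
  have h1 : ((n - l).factorial : ℝ) ≠ 0 := by positivity
  simp only [coeff_mk, coeff_exp, map_div₀, map_one, map_natCast]
  field_simp
  rw [← h]
  ring

open PowerSeries in
/-- A power series whose coefficients satisfy the quadratic convolution recurrence has derivative equal to its square. -/
theorem derivative_mk_of_convolution (a : ℕ → ℝ)
    (hrec : ∀ l : ℕ, ((l : ℝ) + 1) * a (l + 1) = ∑ l' ∈ range (l + 1), a l' * a (l - l')) :
    d⁄dX ℝ (PowerSeries.mk a) = PowerSeries.mk a * PowerSeries.mk a := by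
  ext n
  rw [coeff_derivative, coeff_mul, Nat.sum_antidiagonal_eq_sum_range_succ_mk]
  simp only [coeff_mk]
  rw [← hrec n, mul_comm]

/-- Summing over the pairs with sum at most `n` by first fixing the sum of the pair. -/
theorem sum_filter_add_le (n : ℕ) (f : ℕ × ℕ → ℝ) :
    ∑ p ∈ (range (n + 1) ×ˢ range (n + 1)).filter (fun p => p.1 + p.2 ≤ n), f p
      = ∑ m ∈ range (n + 1), ∑ p ∈ antidiagonal m, f p := by
  rw [← sum_fiberwise_of_maps_to (t := range (n + 1)) (g := fun p : ℕ × ℕ => p.1 + p.2)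
    (by intro p hp; simp only [mem_filter, mem_range] at hp ⊢; omega)]
  refine sum_congr rfl fun m hm => sum_congr ?_ fun _ _ => rfl
  ext p
  simp only [mem_filter, mem_product, mem_range, HasAntidiagonal.mem_antidiagonal] at hm ⊢
  omega

/-- If `zhat` satisfies the convolution recurrence `(l+1)zhat_{l+1} = Σ_{l'=0}^l zhat_{l'} zhat_{l-l'}`,
then `z_n = Σ_{l=0}^n (n!/(n-l)!) zhat_l` satisfies the discrete quadratic map. -/
theorem interpolating_transform_quadratic_map (zhat : ℕ → ℝ)
    (hrec : ∀ l : ℕ, ((l : ℝ) + 1) * zhat (l + 1)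
      = ∑ l' ∈ range (l + 1), zhat l' * zhat (l - l'))
    (z : ℕ → ℝ)
    (hz : ∀ n : ℕ, z n = ∑ l ∈ range (n + 1), (n.descFactorial l : ℝ) * zhat l) :
    ∀ n : ℕ, z (n + 1) - z n
      = ∑ p ∈ (range (n + 1) ×ˢ range (n + 1)).filter (fun p => p.1 + p.2 ≤ n),
          (-1 : ℝ) ^ (p.1 + p.2 + n) / ((p.1.factorial : ℝ) * (p.2.factorial : ℝ))
            * z p.1 * z p.2 * (n.descFactorial (p.1 + p.2) : ℝ) := by
  intro n
  set A := PowerSeries.mk zhat with hA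
  set Z := PowerSeries.mk (fun n => z n / (n.factorial : ℝ)) with hZ
  have hZA : Z = A * PowerSeries.exp ℝ := mk_interpolating_transform zhat z hz
  have hderiv : PowerSeries.derivative ℝ Z - Z
      = Z * Z * PowerSeries.evalNegHom (PowerSeries.exp ℝ) := by
    have hE := PowerSeries.exp_mul_exp_neg_eq_one (A := ℝ)
    have hdA := derivative_mk_of_convolution zhat hrec
    rw [← hA] at hdA
    rw [hZA, Derivation.leibniz, hdA, PowerSeries.derivative_exp, smul_eq_mul, smul_eq_mul]
    linear_combination (-(A * A * PowerSeries.exp ℝ)) * hE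
  have hcoeff := congrArg (PowerSeries.coeff n) hderiv
  rw [map_sub, PowerSeries.coeff_derivative, PowerSeries.coeff_mul,
    Nat.sum_antidiagonal_eq_sum_range_succ_mk] at hcoeff
  have h0 : (n.factorial : ℝ) ≠ 0 := by positivity
  have hlhs : z (n + 1) - z n = n.factorial *
      (PowerSeries.coeff (n + 1) Z * ((n : ℝ) + 1) - PowerSeries.coeff n Z) := by
    simp only [hZ, PowerSeries.coeff_mk, Nat.factorial_succ, Nat.cast_mul, Nat.cast_succ]
    field_simp
  rw [hlhs, hcoeff, sum_filter_add_le, mul_sum]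
  refine sum_congr rfl fun m hm => ?_
  have hm : m ≤ n := Nat.lt_succ_iff.mp (mem_range.mp hm)
  rw [PowerSeries.coeff_mul, sum_mul, mul_sum]
  refine sum_congr rfl fun p hp => ?_
  rw [HasAntidiagonal.mem_antidiagonal.mp hp]
  have h : ((n - m).factorial : ℝ) * (n.descFactorial m : ℝ) = n.factorial := by
    exact_mod_cast Nat.factorial_mul_descFactorial hm
  have h1 : ((n - m).factorial : ℝ) ≠ 0 := by positivity
  have hsign : (-1 : ℝ) ^ (m + n) = (-1) ^ (n - m) := by
    rw [show m + n = 2 * m + (n - m) by omega, pow_add, pow_mul]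
    simp
  rw [hsign, ← h]
  simp only [hZ, PowerSeries.coeff_mk, PowerSeries.evalNegHom, PowerSeries.coeff_rescale,
    PowerSeries.coeff_exp, map_div₀, map_one, map_natCast]
  field_simp
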